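/- arXiv:2506.14996 — 2 statements merged into one kernel-verified Lean document; each statement's English description precedes it below -/
import Mathlib

section
/- For positive integers a and b, the expression [gcd(a,b)]_q / [a+b]_q * qbinom(a+b, a) is a polynomial in q with non-negative integer coefficients, where [n]_q = (1-q^n)/(1-q) and qbinom denotes the Gaussian binomial coefficient. -/
open Polynomial

/-- The `q`-integer `[n]_q = 1 + q + ⋯ + q^{n-1}` as an integer polynomial. -/
noncomputable def qInt (n : ℕ) : Polynomial ℤ := ∑ i ∈ Finset.range n, X ^ i

/-- The `q`-factorial `[n]_q! = [n]_q [n-1]_q ⋯ [1]_q`. -/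
noncomputable def qFact : ℕ → Polynomial ℤ
  | 0 => 1
  | n + 1 => qFact n * qInt (n + 1)


lemma sl2_inj {V : Type*} [AddCommGroup V] [Module ℚ V] (E F : V →ₗ[ℚ] V) (W : ℕ → Submodule ℚ V)
    (N : ℕ) (h0 : ∀ v ∈ W 0, F v = 0) (hF : ∀ w, ∀ v ∈ W (w+1), F v ∈ W w)
    (hH : ∀ w, ∀ v ∈ W w, E (F v) - F (E v) = (2 * (w:ℚ) - N) • v) :
    ∀ w : ℕ, 2 * w < N → ∀ v ∈ W w, ∀ c : ℚ, c ≤ 0 → F (E v) = c • v → v = 0 := by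
  intro w
  induction w with
  | zero =>
    intro hw v hv c hc h
    have h1 := hH 0 v hv
    rw [h0 v hv, h, map_zero, zero_sub, ← neg_smul, ← sub_eq_zero, ← sub_smul] at h1
    have : (0:ℚ) < N := by exact_mod_cast (by omega : 0 < N)
    rcases smul_eq_zero.1 h1 with h2 | h2
    · push_cast at h2; exfalso; linarith
    · exact h2
  | succ w ih =>
    intro hw v hv c hc h
    have h1 := hH _ v hv
    have hN : (2 * ((w + 1 : ℕ):ℚ)) < N := by exact_mod_cast hw
    have h2 : E (F v) = (c + (2 * ((w+1 : ℕ):ℚ) - N)) • v := by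
      rw [add_smul, ← h1, h]; abel
    have h3 := ih (by omega) (F v) (hF w v hv) (c + (2 * ((w+1 : ℕ):ℚ) - N)) (by linarith)
      (by rw [h2, map_smul])
    rw [h3, map_zero] at h2
    rcases smul_eq_zero.1 h2.symm with h4 | h4
    · exfalso; linarith
    · exact h4

lemma qInt_add (m n : ℕ) : qInt (m + n) = qInt m + X ^ m * qInt n := by
  unfold qInt
  rw [Finset.sum_range_add, Finset.mul_sum]
  simp [pow_add]

lemma qInt_mul (n : ℕ) : qInt n * (1 - X) = 1 - X ^ n := by
  unfold qInt
  have := geom_sum_mul (X : ℤ[X]) n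
  linear_combination -this

lemma qInt_ne {n : ℕ} (h : 0 < n) : qInt n ≠ 0 := by
  intro h0
  have := congrArg (eval 1) h0
  simp [qInt, eval_finsetSum] at this
  omega

lemma qFact_ne (n : ℕ) : qFact n ≠ 0 := by
  induction n with
  | zero => simp [qFact]
  | succ n ih => exact mul_ne_zero ih (qInt_ne n.succ_pos)

lemma qInt_coeff (n i : ℕ) : (qInt n).coeff i = if i < n then 1 else 0 := by
  simp [qInt, coeff_X_pow]

lemma qInt_natDegree {n : ℕ} (h : 0 < n) : (qInt n).natDegree = n - 1 := by
  apply natDegree_eq_of_le_of_coeff_ne_zero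
  · rw [natDegree_le_iff_coeff_eq_zero]
    intro N hN
    rw [qInt_coeff, if_neg (by omega)]
  · rw [qInt_coeff, if_pos (by omega)]; simp

lemma qInt_reverse {n : ℕ} (h : 0 < n) : (qInt n).reverse = qInt n := by
  ext i
  rw [coeff_reverse, qInt_natDegree h, qInt_coeff, qInt_coeff]
  by_cases hi : i ≤ n - 1
  · rw [revAt_le hi, if_pos (by omega), if_pos (by omega)]
  · rw [revAt_eq_self_of_lt (by omega)]

lemma qFact_reverse (n : ℕ) : (qFact n).reverse = qFact n := by
  induction n with
  | zero => rw [qFact, ← C_1, reverse_C]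
  | succ n ih => rw [qFact, reverse_mul_of_domain, ih, qInt_reverse n.succ_pos]

lemma qFact_natDegree (n : ℕ) : 2 * (qFact n).natDegree + n = n * n := by
  induction n with
  | zero => simp [qFact]
  | succ n ih =>
    rw [qFact, natDegree_mul (qFact_ne n) (qInt_ne n.succ_pos), qInt_natDegree n.succ_pos]
    have : (n + 1) * (n + 1) = n * n + 2 * n + 1 := by ring
    omega

lemma dvd_gcd_mul (x G : ℤ[X]) (a b : ℕ) : x ∣ qInt a * G → x ∣ qInt b * G →
    x ∣ qInt (Nat.gcd a b) * G := by
  induction a, b using Nat.gcd.induction with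
  | H0 n => intro _ h; simpa using h
  | H1 m n hm ih =>
    intro h1 h2
    rw [Nat.gcd_rec]
    apply ih _ h1
    have key : ∀ k r, x ∣ qInt (r + k * m) * G → x ∣ qInt r * G := by
      intro k
      induction k with
      | zero => intro r h; simpa using h
      | succ k ihk =>
        intro r h
        have h3 : x ∣ qInt (r + m) * G := ihk _ (by convert h using 3; ring)
        rw [qInt_add, add_mul] at h3
        refine (dvd_add_left ?_).1 h3
        rw [mul_assoc]
        exact h1.mul_left _
    apply key (n / m)
    rw [mul_comm (n/m), Nat.mod_add_div]
    exact h2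

/-- exponent vectors of total degree `a` in the variables `x_0, …, x_b` -/
noncomputable def expo (a b : ℕ) : Finset (ℕ →₀ ℕ) := Finset.finsuppAntidiag (Finset.range (b + 1)) a

lemma mem_expo {a b : ℕ} {m : ℕ →₀ ℕ} : m ∈ expo a b ↔ m.degree = a ∧ ∀ i, b < i → m i = 0 := by
  rw [expo, Finset.mem_finsuppAntidiag]
  have : m.support ⊆ Finset.range (b + 1) ↔ ∀ i, b < i → m i = 0 := by
    constructor
    · intro h i hi
      by_contra h0
      have := h (Finsupp.mem_support_iff.2 h0)
      simp at this; omega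
    · intro h i hi
      by_contra h0
      exact (Finsupp.mem_support_iff.1 hi) (h i (by simpa using h0))
  rw [this]
  constructor
  · rintro ⟨h1, h2⟩
    refine ⟨?_, h2⟩
    rw [← h1, Finsupp.degree_apply]
    exact Finset.sum_subset (this.2 h2) (by intro i _ hi; simpa using hi)
  · rintro ⟨h1, h2⟩
    refine ⟨?_, h2⟩
    rw [← h1, Finsupp.degree_apply]
    exact (Finset.sum_subset (this.2 h2) (by intro i _ hi; simpa using hi)).symm

noncomputable def wt : (ℕ →₀ ℕ) →+ ℕ := Finsupp.weight (fun i : ℕ => i)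

lemma wt_single (i k : ℕ) : wt (Finsupp.single i k) = k * i := by
  simp [wt, Finsupp.weight_apply]

noncomputable def GG (a b : ℕ) : ℤ[X] := ∑ m ∈ expo a b, X ^ wt m

lemma GG_coeff (a b i : ℕ) : (GG a b).coeff i = ((expo a b).filter (fun m => wt m = i)).card := by
  simp [GG, coeff_X_pow, eq_comm]

lemma GG_zero_left (b : ℕ) : GG 0 b = 1 := by
  have : expo 0 b = {0} := by
    ext m
    rw [mem_expo, Finsupp.degree_eq_zero_iff, Finset.mem_singleton]
    constructor
    · exact fun h => h.1
    · rintro rfl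
      simp
  simp [GG, this]

lemma GG_zero_right (a : ℕ) : GG a 0 = 1 := by
  have : expo a 0 = {Finsupp.single 0 a} := by
    ext m; rw [mem_expo, Finset.mem_singleton]
    constructor
    · rintro ⟨h1, h2⟩
      have : m = Finsupp.single 0 (m 0) := by
        ext i
        rcases Nat.eq_zero_or_pos i with rfl | hi
        · simp
        · rw [h2 i hi, Finsupp.single_eq_of_ne (by omega)]
      rw [this] at h1 ⊢
      simp at h1
      rw [h1]
    · rintro rfl
      refine ⟨by simp, fun i hi => Finsupp.single_eq_of_ne (by omega)⟩
  simp [GG, this, wt_single]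

lemma GG_rec (a b : ℕ) : GG (a+1) (b+1) = GG (a+1) b + X ^ (b+1) * GG a (b+1) := by
  have h : expo (a+1) (b+1) = expo (a+1) b ∪
      (expo a (b+1)).image (fun m => m + Finsupp.single (b+1) 1) := by
    ext m
    simp only [Finset.mem_union, Finset.mem_image, mem_expo]
    constructor
    · rintro ⟨h1, h2⟩
      by_cases h0 : m (b+1) = 0
      · left
        refine ⟨h1, fun i hi => ?_⟩
        rcases (Nat.succ_le_of_lt hi).eq_or_lt with h | h
        · rw [← h]; exact h0
        · exact h2 i h
      · right
        have hle : Finsupp.single (b+1) 1 ≤ m := by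
          rw [Finsupp.single_le_iff]; omega
        have heq := tsub_add_cancel_of_le hle
        refine ⟨m - Finsupp.single (b+1) 1, ⟨?_, ?_⟩, heq⟩
        · rw [← heq, map_add, Finsupp.degree_single] at h1
          omega
        · intro i hi
          simp [h2 i hi]
    · rintro (⟨h1, h2⟩ | ⟨m, ⟨h1, h2⟩, rfl⟩)
      · exact ⟨h1, fun i hi => h2 i (by omega)⟩
      · refine ⟨by simp [h1], fun i hi => ?_⟩
        simp [h2 i hi, Finsupp.single_eq_of_ne (show i ≠ b + 1 by omega)]
  have hd : Disjoint (expo (a+1) b)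
      ((expo a (b+1)).image (fun m => m + Finsupp.single (b+1) 1)) := by
    rw [Finset.disjoint_left]
    intro m hm hm'
    obtain ⟨m', _, rfl⟩ := Finset.mem_image.1 hm'
    have := (mem_expo.1 hm).2 (b+1) (by omega)
    simp at this
  unfold GG
  rw [h, Finset.sum_union hd, Finset.sum_image (by intro x _ y _ hxy; exact add_right_cancel hxy),
    Finset.mul_sum]
  congr 1
  apply Finset.sum_congr rfl
  intro m _
  rw [map_add, wt_single, pow_add, one_mul, mul_comm]

lemma GG_fact (a b : ℕ) : GG a b * qFact a * qFact b = qFact (a + b) := by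
  suffices h : ∀ n a b, a + b = n → GG a b * qFact a * qFact b = qFact (a + b) from h _ a b rfl
  intro n
  induction n with
  | zero =>
    intro a b h
    obtain ⟨rfl, rfl⟩ : a = 0 ∧ b = 0 := by omega
    simp [GG_zero_left, qFact]
  | succ n ih =>
    intro a b h
    rcases a with _ | a
    · simp [GG_zero_left, qFact]
    rcases b with _ | b
    · simp [GG_zero_right, qFact]
    have h1 := ih (a+1) b (by omega)
    have h2 := ih a (b+1) (by omega)
    rw [show a + (b + 1) = a + 1 + b by omega] at h2
    rw [GG_rec, show a + 1 + (b + 1) = (a + 1 + b) + 1 by omega]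
    have h3 : qFact (a+1+b+1) = qFact (a+1+b) * (qInt (b+1) + X^(b+1) * qInt (a+1)) := by
      rw [← qInt_add, qFact]; congr 2; omega
    rw [h3, mul_add]
    nth_rewrite 1 [← h1]
    rw [← h2]
    simp only [qFact]
    ring

noncomputable def opE (b : ℕ) : Derivation ℚ (MvPolynomial ℕ ℚ) (MvPolynomial ℕ ℚ) :=
  MvPolynomial.mkDerivation ℚ (fun i => MvPolynomial.monomial (Finsupp.single (i+1) 1) ((b:ℚ) - i))

noncomputable def opF : Derivation ℚ (MvPolynomial ℕ ℚ) (MvPolynomial ℕ ℚ) :=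
  MvPolynomial.mkDerivation ℚ (fun i => MvPolynomial.monomial (Finsupp.single (i-1) 1) (i:ℚ))

noncomputable def opH (b : ℕ) : Derivation ℚ (MvPolynomial ℕ ℚ) (MvPolynomial ℕ ℚ) :=
  MvPolynomial.mkDerivation ℚ (fun i => MvPolynomial.monomial (Finsupp.single i 1) (2 * (i:ℚ) - b))

lemma opH_eq (b : ℕ) : ⁅opE b, opF⁆ = opH b := by
  apply MvPolynomial.derivation_ext
  intro i
  have e : ∀ (i : ℕ) (c : ℚ), MvPolynomial.monomial (Finsupp.single i 1) c
      = c • (MvPolynomial.X i : MvPolynomial ℕ ℚ) := by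
    intro i c
    rw [MvPolynomial.X, MvPolynomial.smul_monomial]; simp
  have hE : ∀ i, opE b (MvPolynomial.X i) = ((b:ℚ) - i) • MvPolynomial.X (i+1) := by
    intro i; rw [opE, MvPolynomial.mkDerivation_X, e]
  have hF : ∀ i, opF (MvPolynomial.X i) = (i:ℚ) • MvPolynomial.X (i-1) := by
    intro i; rw [opF, MvPolynomial.mkDerivation_X, e]
  have hH : opH b (MvPolynomial.X i) = (2 * (i:ℚ) - b) • MvPolynomial.X i := by
    rw [opH, MvPolynomial.mkDerivation_X, e]
  rw [Derivation.commutator_apply, hH, hE, hF, Derivation.map_smul, Derivation.map_smul, hE, hF]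
  rcases i with _ | i
  · simp
  · simp only [Nat.add_sub_cancel, smul_smul, ← sub_smul]
    congr 1
    push_cast
    ring

noncomputable def Sset (a b w : ℕ) : Finset (ℕ →₀ ℕ) := (expo a b).filter (fun m => wt m = w)

lemma mem_Sset {a b w : ℕ} {m : ℕ →₀ ℕ} :
    m ∈ Sset a b w ↔ (m.degree = a ∧ ∀ i, b < i → m i = 0) ∧ wt m = w := by
  rw [Sset, Finset.mem_filter, mem_expo]

noncomputable def Wsp (a b w : ℕ) : Submodule ℚ (MvPolynomial ℕ ℚ) :=
  Submodule.span ℚ (Set.range fun m : Sset a b w => MvPolynomial.monomial m.1 (1:ℚ))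

lemma mono_mem {a b w : ℕ} {m : ℕ →₀ ℕ} (h : m ∈ Sset a b w) (c : ℚ) :
    MvPolynomial.monomial m c ∈ Wsp a b w := by
  have : MvPolynomial.monomial m c = c • MvPolynomial.monomial m (1:ℚ) := by
    rw [MvPolynomial.smul_monomial]; simp
  rw [this]
  exact Submodule.smul_mem _ _ (Submodule.subset_span ⟨⟨m, h⟩, rfl⟩)

lemma Wsp_map {a b w : ℕ} (D : MvPolynomial ℕ ℚ →ₗ[ℚ] MvPolynomial ℕ ℚ)
    (U : Submodule ℚ (MvPolynomial ℕ ℚ))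
    (h : ∀ m ∈ Sset a b w, D (MvPolynomial.monomial m 1) ∈ U) :
    ∀ v ∈ Wsp a b w, D v ∈ U := by
  have : Wsp a b w ≤ U.comap D := by
    apply Submodule.span_le.2
    rintro _ ⟨m, rfl⟩
    exact h m.1 m.2
  exact this

lemma split_single {m : ℕ →₀ ℕ} {i : ℕ} (h : i ∈ m.support) :
    m = (m - Finsupp.single i 1) + Finsupp.single i 1 := by
  refine (tsub_add_cancel_of_le ?_).symm
  rw [Finsupp.single_le_iff]
  have := Finsupp.mem_support_iff.1 h
  omega

lemma move_mem {a b w : ℕ} {m : ℕ →₀ ℕ} (h : m ∈ Sset a b w) {i j w' : ℕ} (hi : i ∈ m.support)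
    (hj : j ≤ b) (hw : w' + i = w + j) :
    m - Finsupp.single i 1 + Finsupp.single j 1 ∈ Sset a b w' := by
  have hs := split_single hi
  rw [mem_Sset] at h ⊢
  obtain ⟨⟨h1, h2⟩, h3⟩ := h
  rw [hs, map_add, Finsupp.degree_single] at h1
  rw [hs, map_add, wt_single] at h3
  refine ⟨⟨by rw [map_add, Finsupp.degree_single]; exact h1, ?_⟩, ?_⟩
  · intro k hk
    simp [h2 k hk, Finsupp.single_eq_of_ne (show k ≠ j by omega)]
  · rw [map_add, wt_single]; omega

lemma opE_mem (a b w : ℕ) : ∀ v ∈ Wsp a b w, (opE b).toLinearMap v ∈ Wsp a b (w+1) := by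
  apply Wsp_map
  intro m hm
  change opE b _ ∈ _
  rw [opE, MvPolynomial.mkDerivation_monomial, one_smul]
  refine Submodule.sum_mem _ fun i hi => ?_
  simp only [smul_eq_mul, MvPolynomial.monomial_mul]
  have hib : i ≤ b := by
    by_contra hlt
    exact Finsupp.mem_support_iff.1 hi ((mem_Sset.1 hm).1.2 i (by omega))
  rcases hib.eq_or_lt with rfl | hlt
  · simp
  · exact mono_mem (move_mem hm hi hlt (by omega)) _

lemma opF_mem (a b w : ℕ) : ∀ v ∈ Wsp a b (w+1), opF.toLinearMap v ∈ Wsp a b w := by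
  apply Wsp_map
  intro m hm
  change opF _ ∈ _
  rw [opF, MvPolynomial.mkDerivation_monomial, one_smul]
  refine Submodule.sum_mem _ fun i hi => ?_
  simp only [smul_eq_mul, MvPolynomial.monomial_mul]
  have hib : i ≤ b := by
    by_contra hlt
    exact Finsupp.mem_support_iff.1 hi ((mem_Sset.1 hm).1.2 i (by omega))
  rcases i with _ | i
  · simp
  · exact mono_mem (move_mem hm hi (by omega) (by omega)) _

lemma opF_zero (a b : ℕ) : ∀ v ∈ Wsp a b 0, opF.toLinearMap v = 0 := by
  have := Wsp_map (a := a) (b := b) (w := 0) opF.toLinearMap ⊥ ?_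
  · simpa using this
  intro m hm
  change opF _ ∈ _
  rw [opF, MvPolynomial.mkDerivation_monomial, one_smul]
  refine Submodule.sum_mem _ fun i hi => ?_
  simp only [smul_eq_mul, MvPolynomial.monomial_mul]
  rcases i with _ | i
  · simp
  · exfalso
    have h3 := (mem_Sset.1 hm).2
    rw [split_single hi, map_add, wt_single] at h3
    omega

lemma wt_cast (b : ℕ) (m : ℕ →₀ ℕ) :
    (m.sum fun i k => (k:ℚ) * (2 * (i:ℚ) - b)) = 2 * (wt m : ℚ) - (m.degree : ℚ) * b := by
  rw [wt, Finsupp.weight_apply, Finsupp.degree_apply, Finsupp.sum, Finsupp.sum]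
  push_cast
  rw [Finset.mul_sum, Finset.sum_mul, ← Finset.sum_sub_distrib]
  refine Finset.sum_congr rfl fun i _ => ?_
  simp
  ring

lemma opH_mem (a b w : ℕ) : ∀ v ∈ Wsp a b w,
    (opE b).toLinearMap (opF.toLinearMap v) - opF.toLinearMap ((opE b).toLinearMap v)
      = (2 * (w:ℚ) - ((a * b : ℕ) : ℚ)) • v := by
  have := Wsp_map (a := a) (b := b) (w := w)
    ((opH b).toLinearMap - (2 * (w:ℚ) - ((a * b : ℕ) : ℚ)) • LinearMap.id) ⊥ ?_
  · intro v hv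
    have h := this v hv
    rw [Submodule.mem_bot, LinearMap.sub_apply, sub_eq_zero] at h
    change opE b (opF v) - opF (opE b v) = _
    rw [← Derivation.commutator_apply, opH_eq]
    exact h
  intro m hm
  rw [Submodule.mem_bot, LinearMap.sub_apply, sub_eq_zero]
  change opH b _ = (2 * (w:ℚ) - ((a * b : ℕ) : ℚ)) • MvPolynomial.monomial m (1:ℚ)
  rw [opH, MvPolynomial.mkDerivation_monomial, one_smul, MvPolynomial.smul_monomial]
  obtain ⟨⟨h1, h2⟩, h3⟩ := mem_Sset.1 hm
  have hc := wt_cast b m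
  rw [h1, h3] at hc
  push_cast
  rw [← hc, Finsupp.sum, Finsupp.sum, smul_eq_mul, mul_one, map_sum]
  refine Finset.sum_congr rfl fun i hi => ?_
  rw [smul_eq_mul, MvPolynomial.monomial_mul, ← split_single hi]

lemma Sset_card (a b w : ℕ) (h : 2 * w < a * b) : (Sset a b w).card ≤ (Sset a b (w+1)).card := by
  have hinj : Set.InjOn (opE b).toLinearMap (Wsp a b w) := by
    intro x hx y hy hxy
    rw [← sub_eq_zero]
    refine sl2_inj (opE b).toLinearMap opF.toLinearMap (Wsp a b) (a * b) (opF_zero a b)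
      (opF_mem a b) (opH_mem a b) w h (x - y) (Submodule.sub_mem _ hx hy) 0 le_rfl ?_
    rw [map_sub, hxy, sub_self, map_zero, zero_smul]
  have hli : LinearIndependent ℚ (fun m : Sset a b w => MvPolynomial.monomial m.1 (1:ℚ)) := by
    have := (MvPolynomial.basisMonomials ℕ ℚ).linearIndependent
    have h2 := this.comp (fun m : Sset a b w => m.1) Subtype.val_injective
    simpa [Function.comp_def] using h2
  have hli2 := hli.map_injOn _ hinj
  have h3 := linearIndependent_le_span' _ hli2
    (Set.range fun m : Sset a b (w+1) => MvPolynomial.monomial m.1 (1:ℚ)) (by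
      rintro _ ⟨m, rfl⟩
      exact opE_mem a b w _ (Submodule.subset_span ⟨m, rfl⟩))
  simp only [Cardinal.mk_coe_finset, Nat.cast_le] at h3
  refine h3.trans ((Fintype.card_range_le _).trans ?_)
  simp

lemma GG_mono (a b i j : ℕ) (hij : i ≤ j) (h : 2 * j ≤ a * b) :
    (GG a b).coeff i ≤ (GG a b).coeff j := by
  induction j, hij using Nat.le_induction with
  | base => exact le_rfl
  | succ j hij ih =>
    refine (ih (by omega)).trans ?_
    rw [GG_coeff, GG_coeff]
    exact_mod_cast Sset_card a b j (by omega)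

theorem stmt0 (a b : ℕ) (ha : 0 < a) (hb : 0 < b) :
    ∃ P : Polynomial ℤ, (∀ i, 0 ≤ P.coeff i) ∧
      P * qInt (a + b) * qFact a * qFact b = qInt (Nat.gcd a b) * qFact (a + b) := by
  have hd : 0 < Nat.gcd a b := Nat.gcd_pos_of_pos_left _ ha
  have hdvd : qInt (a + b) ∣ qInt (Nat.gcd a b) * GG a b := by
    have hG := GG_fact a b
    apply dvd_gcd_mul
    · obtain ⟨a, rfl⟩ : ∃ a', a = a' + 1 := ⟨a - 1, by omega⟩
      refine ⟨GG a b, ?_⟩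
      have h2 := GG_fact a b
      apply mul_right_cancel₀ (mul_ne_zero (qFact_ne a) (qFact_ne b))
      rw [show a + 1 + b = a + b + 1 by omega] at hG ⊢
      simp only [qFact] at hG
      linear_combination hG - qInt (a + b + 1) * h2
    · obtain ⟨b, rfl⟩ : ∃ b', b = b' + 1 := ⟨b - 1, by omega⟩
      refine ⟨GG a b, ?_⟩
      have h2 := GG_fact a b
      apply mul_right_cancel₀ (mul_ne_zero (qFact_ne a) (qFact_ne b))
      rw [show a + (b + 1) = a + b + 1 by omega] at hG ⊢
      simp only [qFact] at hG
      linear_combination hG - qInt (a + b + 1) * h2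
  obtain ⟨P, hP⟩ := hdvd
  have hfact : P * qInt (a + b) * qFact a * qFact b = qInt (Nat.gcd a b) * qFact (a + b) := by
    rw [← GG_fact a b]
    linear_combination (-(qFact a * qFact b)) * hP
  refine ⟨P, ?_, hfact⟩
  have hn : 0 < a + b := by omega
  have hda : Nat.gcd a b ≤ a := Nat.gcd_le_left _ ha
  generalize Nat.gcd a b = d at *
  have hne : P ≠ 0 := by
    rintro rfl
    simp only [zero_mul] at hfact
    exact mul_ne_zero (qInt_ne hd) (qFact_ne _) hfact.symm
  have hrev : P.reverse = P := by
    have h := congrArg reverse hfact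
    simp only [reverse_mul_of_domain, qFact_reverse, qInt_reverse hn, qInt_reverse hd] at h
    rw [← hfact] at h
    exact mul_right_cancel₀ (qInt_ne hn)
      (mul_right_cancel₀ (qFact_ne a) (mul_right_cancel₀ (qFact_ne b) h))
  have hdeg : P.natDegree ≤ a * b := by
    have h := congrArg natDegree hfact
    rw [natDegree_mul (mul_ne_zero (mul_ne_zero hne (qInt_ne hn)) (qFact_ne a)) (qFact_ne b),
      natDegree_mul (mul_ne_zero hne (qInt_ne hn)) (qFact_ne a),
      natDegree_mul hne (qInt_ne hn), natDegree_mul (qInt_ne hd) (qFact_ne _),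
      qInt_natDegree hn, qInt_natDegree hd] at h
    have h1 := qFact_natDegree a
    have h2 := qFact_natDegree b
    have h3 := qFact_natDegree (a + b)
    have h4 : (a + b) * (a + b) = a * a + 2 * (a * b) + b * b := by ring
    omega
  have hrec : P = P * X ^ (a + b) + GG a b - GG a b * X ^ d := by
    have h1 := qInt_mul (a + b)
    have h2 := qInt_mul d
    linear_combination (-(1 - X)) * hP - P * h1 + GG a b * h2
  have hlow : ∀ i, 2 * i ≤ a * b → 0 ≤ P.coeff i := by
    intro i
    induction i using Nat.strong_induction_on with
    | _ i ih =>
      intro hi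
      have h := congrArg (fun p => coeff p i) hrec
      simp only [coeff_sub, coeff_add, coeff_mul_X_pow'] at h
      rw [h]
      have h1 : 0 ≤ if a + b ≤ i then P.coeff (i - (a + b)) else 0 := by
        split_ifs with hc
        · exact ih _ (by omega) (by omega)
        · exact le_rfl
      have h2 : (if d ≤ i then (GG a b).coeff (i - d) else 0) ≤ (GG a b).coeff i := by
        split_ifs with hc
        · exact GG_mono a b _ _ (by omega) hi
        · rw [GG_coeff]; exact Int.natCast_nonneg _
      linarith
  intro i
  by_cases hi : i ≤ P.natDegree
  · by_cases h2 : 2 * i ≤ a * b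
    · exact hlow i h2
    · rw [← hrev, coeff_reverse, revAt_le hi]
      exact hlow _ (by omega)
  · rw [coeff_eq_zero_of_natDegree_lt (by omega)]
end

section
/- For positive integers m and n with n ≥ 2, setting l = 2 in the multichain count gives: the total number of positive m-divisible non-crossing partitions of {1,2,...,mn} equals (1/n) · C((m+1)n - 2, n - 1). -/
/-- A finpartition of `Fin N` (representing the points `1, …, N` placed in this order around
a circle) is non-crossing if there are no `a < b < c < d` with `a, c` in one block and
`b, d` in a different block. -/
def IsNoncrossing {N : ℕ} (P : Finpartition (Finset.univ : Finset (Fin N))) : Prop :=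
  ∀ B ∈ P.parts, ∀ C ∈ P.parts, ∀ a b c d : Fin N,
    a < b → b < c → c < d → a ∈ B → c ∈ B → b ∈ C → d ∈ C → B = C


/-- Prefix sums of the periodic extension. -/
def preS {L : ℕ} [NeZero L] (c : Fin L → ℕ) (q : ℕ) : ℕ :=
  ∑ j ∈ Finset.range q, c (Fin.ofNat L j)

def GoodW (m : ℕ) {L : ℕ} [NeZero L] (c : Fin L → ℕ) : Prop :=
  ∀ q, 0 < q → q ≤ L → q < m * preS c q

def rotW {L : ℕ} [NeZero L] (k : Fin L) (c : Fin L → ℕ) : Fin L → ℕ := fun i => c (k + i)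

lemma preS_full {L : ℕ} [NeZero L] (c : Fin L → ℕ) : preS c L = ∑ i, c i := by
  unfold preS
  rw [Finset.sum_range]
  exact Finset.sum_congr rfl fun i _ => by rw [Fin.ofNat_val_eq_self]

lemma preS_add {L : ℕ} [NeZero L] (c : Fin L → ℕ) (k q : ℕ) :
    preS c (k + q) = preS c k + preS (rotW (Fin.ofNat L k) c) q := by
  unfold preS rotW
  rw [Finset.sum_range_add]
  congr 1
  refine Finset.sum_congr rfl fun i _ => ?_
  congr 1
  ext
  simp [Fin.val_add]

lemma sum_rotW {L : ℕ} [NeZero L] (c : Fin L → ℕ) (k : Fin L) :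
    ∑ i, rotW k c i = ∑ i, c i :=
  Equiv.sum_comp (Equiv.addLeft k) c

lemma raney_exists (L : ℕ) (hL : 0 < L) (S : ℕ → ℤ) (hS : ∀ i, S (i + L) = S i + 1) :
    ∃ k < L, ∀ q, 0 < q → q ≤ L → S k < S (k + q) := by
  obtain ⟨k, hk, hmin⟩ := Finset.exists_min_image (Finset.range L)
    (fun i => S i * (L + 1) - i) ⟨0, by simpa⟩
  rw [Finset.mem_range] at hk
  refine ⟨k, hk, fun q h0 hq => ?_⟩
  have hk' : (k : ℤ) < L := by exact_mod_cast hk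
  by_cases h : k + q < L
  · have h1 := hmin (k + q) (by simpa using h)
    push_cast at h1
    by_contra hc
    push Not at hc
    have : S (k + q) * ((L : ℤ) + 1) ≤ S k * (L + 1) := by gcongr
    have : (0 : ℤ) < q := by exact_mod_cast h0
    linarith
  · obtain ⟨r, hr⟩ : ∃ r, k + q = r + L := ⟨k + q - L, by omega⟩
    have h1 := hmin r (by simp; omega)
    rw [hr, hS]
    by_contra hc
    push Not at hc
    have h2 : (S r + 1) * ((L : ℤ) + 1) ≤ S k * (L + 1) := by gcongr
    have : (0 : ℤ) ≤ r := by positivity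
    have : (r : ℤ) ≤ k := by exact_mod_cast (by omega : r ≤ k)
    nlinarith

lemma rot_exists (m n L : ℕ) [NeZero L] (hN : m * n = L + 1) (c : Fin L → ℕ)
    (hc : ∑ i, c i = n) : ∃ k : Fin L, GoodW m (rotW k c) := by
  have hp : ∀ i, preS c (i + L) = preS c i + n := fun i => by
    rw [preS_add, preS_full, sum_rotW, hc]
  obtain ⟨k, hk, h⟩ := raney_exists L (NeZero.pos L) (fun i => (m * preS c i : ℤ) - i) (by
    intro i
    simp only [hp]
    push_cast
    have : (m * n : ℤ) = L + 1 := by exact_mod_cast hN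
    linarith)
  refine ⟨Fin.ofNat L k, fun q h0 hq => ?_⟩
  have := h q h0 hq
  simp only [preS_add] at this
  push_cast at this
  have : (q : ℤ) < m * preS (rotW (Fin.ofNat L k) c) q := by linarith
  exact_mod_cast this

lemma rot_unique (m n L : ℕ) [NeZero L] (hN : m * n = L + 1) (c : Fin L → ℕ)
    (hc : ∑ i, c i = n) (k : Fin L) (h0 : GoodW m c) (h1 : GoodW m (rotW k c)) : k = 0 := by
  by_contra hk
  have hkp : 0 < k.val := Nat.pos_of_ne_zero fun h => hk (Fin.ext (by simpa using h))
  have e := preS_add c k.val (L - k.val)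
  rw [Fin.ofNat_val_eq_self, Nat.add_sub_cancel' k.isLt.le, preS_full, hc] at e
  have a := h0 k.val hkp k.isLt.le
  have b := h1 (L - k.val) (by omega) (by omega)
  have : m * n = m * preS c k.val + m * preS (rotW k c) (L - k.val) := by rw [e]; ring
  omega

lemma rotW_rotW {L : ℕ} [NeZero L] (c : Fin L → ℕ) (k l : Fin L) :
    rotW k (rotW l c) = rotW (l + k) c := by
  funext i; simp [rotW, add_assoc]

lemma card_good (m n L : ℕ) [NeZero L] (hN : m * n = L + 1) :
    L * Nat.card {c : Fin L → ℕ // ∑ i, c i = n ∧ GoodW m c} = (L + n - 1).choose n := by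
  have e1 : Nat.card {c : Fin L → ℕ // ∑ i, c i = n} = (L + n - 1).choose n := by
    rw [← Nat.card_congr (Sym.equivNatSumOfFintype (Fin L) n), Nat.card_eq_fintype_card,
      Sym.card_sym_eq_choose, Fintype.card_fin]
  rw [← e1]
  have e2 : L = Nat.card (Fin L) := by simp
  conv_lhs => arg 1; rw [e2]
  rw [← Nat.card_prod]
  refine Nat.card_eq_of_bijective (fun p => ⟨rotW p.1 p.2.1, by rw [sum_rotW]; exact p.2.2.1⟩) ?_
  constructor
  · rintro ⟨k, c, hc, gc⟩ ⟨k', c', hc', gc'⟩ h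
    simp only [Subtype.mk.injEq] at h
    have h2 : c' = rotW (k - k') c := by
      have := congrArg (rotW (-k')) h
      rw [rotW_rotW, rotW_rotW] at this
      rw [sub_eq_add_neg, this]
      funext i; simp [rotW]
    have := rot_unique m n L hN c hc (k - k') gc (h2 ▸ gc')
    rw [this] at h2
    have hk : k = k' := sub_eq_zero.mp this
    subst hk
    have : c' = c := by rw [h2]; funext i; simp [rotW]
    subst this
    rfl
  · rintro ⟨c, hc⟩
    obtain ⟨k, hk⟩ := rot_exists m n L hN c hc
    refine ⟨⟨-k, rotW k c, by rw [sum_rotW]; exact hc, hk⟩, ?_⟩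
    simp only [Subtype.mk.injEq]
    rw [rotW_rotW]; funext i; simp [rotW]

lemma final_arith (n L X : ℕ) (hL : 0 < L) (hn : 0 < n) (h : L * X = (L + n - 1).choose n) :
    n * X = (L + n - 1).choose (n - 1) := by
  obtain ⟨k, rfl⟩ : ∃ k, n = k + 1 := ⟨n - 1, by omega⟩
  have := Nat.choose_succ_right_eq (L + (k + 1) - 1) k
  rw [← h, show L + (k + 1) - 1 - k = L by omega] at this
  apply Nat.eq_of_mul_eq_mul_left hL
  simp only [Nat.add_sub_cancel] at *
  linarith

lemma op_unique (h : ℕ → ℤ) (i p p' : ℕ)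
    (hp : p ≤ i ∧ h p ≤ h (i + 1) ∧ ∀ q, p < q → q ≤ i → h (i + 1) < h q)
    (hp' : p' ≤ i ∧ h p' ≤ h (i + 1) ∧ ∀ q, p' < q → q ≤ i → h (i + 1) < h q) : p = p' := by
  rcases lt_trichotomy p p' with h1 | h1 | h1
  · have := hp.2.2 p' h1 hp'.1
    have := hp'.2.1
    omega
  · exact h1
  · have := hp'.2.2 p h1 hp.1
    have := hp.2.1
    omega

open Classical in
noncomputable def opn (h : ℕ → ℤ) (i : ℕ) : ℕ := Nat.findGreatest (fun p => h p ≤ h (i + 1)) i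

lemma opn_spec (h : ℕ → ℤ) (i : ℕ) (h0 : h 0 ≤ h (i + 1)) :
    opn h i ≤ i ∧ h (opn h i) ≤ h (i + 1) ∧ ∀ q, opn h i < q → q ≤ i → h (i + 1) < h q := by
  classical
  refine ⟨Nat.findGreatest_le i, ?_, fun q hq hqi => ?_⟩
  · exact Nat.findGreatest_spec (P := fun p => h p ≤ h (i + 1)) (Nat.zero_le i) h0
  · have := Nat.findGreatest_is_greatest (P := fun p => h p ≤ h (i + 1)) hq hqi
    omega

/-- The conditions on the height function. -/
structure Hgt (N : ℕ) (h : ℕ → ℤ) : Prop where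
  zero : h 0 = 0
  last : h N = 0
  pos : ∀ q, 0 < q → q < N → 0 < h q
  step : ∀ i, i < N → h i - 1 ≤ h (i + 1)

lemma Hgt.nonneg {N : ℕ} {h : ℕ → ℤ} (H : Hgt N h) (q : ℕ) (hq : q ≤ N) : 0 ≤ h q := by
  rcases Nat.eq_zero_or_pos q with rfl | h0
  · exact H.zero.ge
  · rcases hq.eq_or_lt with rfl | h1
    · exact H.last.ge
    · exact (H.pos q h0 h1).le

lemma Hgt.spec {N : ℕ} {h : ℕ → ℤ} (H : Hgt N h) (i : ℕ) (hi : i < N) :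
    opn h i ≤ i ∧ h (opn h i) ≤ h (i + 1) ∧ ∀ q, opn h i < q → q ≤ i → h (i + 1) < h q :=
  opn_spec h i (by rw [H.zero]; exact H.nonneg _ hi)

lemma Hgt.card_fiber {N : ℕ} {h : ℕ → ℤ} (H : Hgt N h) (p : ℕ) (hp : p < N) :
    ((Finset.univ.filter fun i : Fin N => opn h i = p).card : ℤ) = h (p + 1) + 1 - h p := by
  have e : (Finset.univ.filter fun i : Fin N => opn h i = p).card
      = (Finset.Icc (h p) (h (p + 1))).card := by
    refine Finset.card_bij (fun i _ => h (i.val + 1)) ?_ ?_ ?_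
    · intro i hi
      simp only [Finset.mem_filter, Finset.mem_univ, true_and] at hi
      obtain ⟨a, b, c⟩ := H.spec i i.isLt
      rw [hi] at a b c
      rw [Finset.mem_Icc]
      refine ⟨b, ?_⟩
      rcases a.eq_or_lt with h1 | h1
      · rw [h1]
      · exact (c (p + 1) (by omega) h1).le
    · intro i hi j hj hij
      simp only [Finset.mem_filter, Finset.mem_univ, true_and] at hi hj
      obtain ⟨a, b, c⟩ := H.spec i i.isLt
      obtain ⟨a', b', c'⟩ := H.spec j j.isLt
      rw [hi] at a b c
      rw [hj] at a' b' c'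
      rcases lt_trichotomy i.val j.val with h1 | h1 | h1
      · have := c' (i + 1) (by omega) h1
        omega
      · exact Fin.ext h1
      · have := c (j + 1) (by omega) h1
        omega
    · intro v hv
      rw [Finset.mem_Icc] at hv
      have hex : ∃ d, p + d < N ∧ h (p + d + 1) ≤ v := by
        refine ⟨N - 1 - p, by omega, ?_⟩
        rw [show p + (N - 1 - p) + 1 = N by omega, H.last]
        exact (H.nonneg p hp.le).trans hv.1
      classical
      obtain ⟨hd1, hd2⟩ := Nat.find_spec hex
      have hmin := fun d => Nat.find_min hex (m := d)
      generalize Nat.find hex = d at *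
      have hbig : ∀ q, p < q → q ≤ p + d → v < h q := by
        intro q hq hq'
        have := hmin (q - p - 1) (by omega)
        rw [show p + (q - p - 1) + 1 = q by omega] at this
        by_contra hc
        exact this ⟨by omega, by omega⟩
      have hv' : h (p + d + 1) = v := by
        apply le_antisymm hd2
        rcases Nat.eq_zero_or_pos d with rfl | hd
        · exact hv.2
        · have := hbig (p + d) (by omega) le_rfl
          have := H.step (p + d) hd1
          omega
      refine ⟨⟨p + d, hd1⟩, ?_, hv'⟩
      simp only [Finset.mem_filter, Finset.mem_univ, true_and]
      refine op_unique h (p + d) _ _ (H.spec (p + d) hd1) ⟨by omega, ?_, ?_⟩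
      · rw [hv']; exact hv.1
      · intro q hq hq'
        rw [hv']; exact hbig q hq hq'
  have hs := H.step p hp
  rw [e, Int.card_Icc, Int.toNat_of_nonneg (by omega)]

lemma Hgt.noncross {N : ℕ} {h : ℕ → ℤ} (H : Hgt N h) (a b c d : ℕ) (hab : a < b) (hbc : b < c)
    (hcd : c < d) (hd : d < N) (h1 : opn h a = opn h c) (h2 : opn h b = opn h d) :
    opn h a = opn h b := by
  obtain ⟨a1, a2, a3⟩ := H.spec a (by omega)
  obtain ⟨b1, b2, b3⟩ := H.spec b (by omega)
  obtain ⟨c1, c2, c3⟩ := H.spec c (by omega)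
  obtain ⟨d1, d2, d3⟩ := H.spec d (by omega)
  rw [← h1] at c1 c2 c3
  rw [← h2] at d1 d2 d3
  generalize opn h a = p at *
  generalize opn h b = q at *
  rcases lt_trichotomy p q with h | h | h
  · have := c3 q h (by omega)
    have := d3 (c + 1) (by omega) (by omega)
    omega
  · exact h
  · have := b3 p h (by omega)
    have := c3 (b + 1) (by omega) (by omega)
    omega

lemma Hgt.idem {N : ℕ} {h : ℕ → ℤ} (H : Hgt N h) (i : ℕ) (hi : i < N) :
    opn h (opn h i) = opn h i := by
  obtain ⟨a, b, c⟩ := H.spec i hi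
  generalize opn h i = p at *
  refine op_unique h p _ _ (H.spec p (by omega)) ⟨le_rfl, ?_, fun q _ _ => by omega⟩
  rcases a.eq_or_lt with h1 | h1
  · rw [h1]; rwa [h1] at b
  · have := c (p + 1) (by omega) h1
    omega

/-- The least element of the block of `x`. -/
def mu {N : ℕ} (P : Finpartition (Finset.univ : Finset (Fin N))) (x : Fin N) : Fin N :=
  (P.part x).min' (by simp)

lemma mu_mem {N : ℕ} (P : Finpartition (Finset.univ : Finset (Fin N))) (x : Fin N) :
    mu P x ∈ P.part x := Finset.min'_mem _ _

lemma mu_le {N : ℕ} (P : Finpartition (Finset.univ : Finset (Fin N))) (x : Fin N) :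
    mu P x ≤ x := Finset.min'_le _ _ (by simp)

lemma part_mu {N : ℕ} (P : Finpartition (Finset.univ : Finset (Fin N))) (x : Fin N) :
    P.part (mu P x) = P.part x := P.part_eq_of_mem (by simp) (mu_mem P x)

lemma mu_eq_iff {N : ℕ} (P : Finpartition (Finset.univ : Finset (Fin N))) (x y : Fin N) :
    mu P x = mu P y ↔ P.part x = P.part y := by
  constructor
  · intro h; rw [← part_mu P x, h, part_mu]
  · intro h; unfold mu; simp only [h]

lemma mu_mu {N : ℕ} (P : Finpartition (Finset.univ : Finset (Fin N))) (x : Fin N) :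
    mu P (mu P x) = mu P x := by rw [mu_eq_iff, part_mu]

lemma mem_part_iff_mu {N : ℕ} (P : Finpartition (Finset.univ : Finset (Fin N))) (x y : Fin N) :
    y ∈ P.part x ↔ mu P y = mu P x := by
  rw [mu_eq_iff, P.mem_part_iff_part_eq_part (by simp) (by simp)]

lemma eq_of_mu {N : ℕ} (P Q : Finpartition (Finset.univ : Finset (Fin N)))
    (h : ∀ x, mu P x = mu Q x) : P = Q := by
  have hp : ∀ x, P.part x = Q.part x := fun x => by
    ext y; rw [mem_part_iff_mu, mem_part_iff_mu, h, h]
  have key : ∀ P : Finpartition (Finset.univ : Finset (Fin N)), ∀ B,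
      B ∈ P.parts ↔ ∃ x, P.part x = B := by
    intro P B
    constructor
    · intro hB
      obtain ⟨x, hx⟩ := P.nonempty_of_mem_parts hB
      exact ⟨x, P.part_eq_of_mem hB hx⟩
    · rintro ⟨x, rfl⟩
      simp
  ext B
  rw [key, key]
  simp only [hp]

lemma nc_mu {N : ℕ} {P : Finpartition (Finset.univ : Finset (Fin N))} (hP : IsNoncrossing P)
    (a b c d : Fin N) (hab : a < b) (hbc : b < c) (hcd : c < d) (h1 : mu P a = mu P c)
    (h2 : mu P b = mu P d) : mu P a = mu P b := by
  rw [mu_eq_iff]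
  refine hP _ (by simp) _ (by simp) a b c d hab hbc hcd (by simp) ?_ (by simp) ?_
  · rw [mem_part_iff_mu, h1]
  · rw [mem_part_iff_mu, h2]

/-- Total size of the blocks opened before `q`. -/
def Sm {N : ℕ} (P : Finpartition (Finset.univ : Finset (Fin N))) (q : ℕ) : ℕ :=
  (Finset.univ.filter fun x : Fin N => (mu P x).val < q).card

/-- Elements after `q` in blocks opened before `q`. -/
def Up {N : ℕ} (P : Finpartition (Finset.univ : Finset (Fin N))) (q : ℕ) : Finset (Fin N) :=
  Finset.univ.filter fun x : Fin N => q ≤ x.val ∧ (mu P x).val < q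

lemma mem_Up {N : ℕ} (P : Finpartition (Finset.univ : Finset (Fin N))) (q : ℕ) (x : Fin N) :
    x ∈ Up P q ↔ q ≤ x.val ∧ (mu P x).val < q := by simp [Up]

lemma Sm_eq {N : ℕ} (P : Finpartition (Finset.univ : Finset (Fin N))) (q : ℕ) (hq : q ≤ N) :
    Sm P q = q + (Up P q).card := by
  unfold Sm Up
  rw [← Finset.card_filter_add_card_filter_not (fun x : Fin N => x.val < q),
    Finset.filter_filter, Finset.filter_filter]
  congr 1
  · have : (Finset.univ.filter fun x : Fin N => (mu P x).val < q ∧ x.val < q)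
        = Finset.univ.filter fun x : Fin N => x.val < q := by
      ext x
      have := mu_le P x
      simp only [Finset.mem_filter, Finset.mem_univ, true_and]
      rw [Fin.le_def] at this
      omega
    rw [this]
    rw [Fin.card_filter_val_lt]
    omega
  · congr 1
    ext x
    simp only [Finset.mem_filter, Finset.mem_univ, true_and]
    omega

lemma mu_char {N : ℕ} {P : Finpartition (Finset.univ : Finset (Fin N))} (hP : IsNoncrossing P)
    (i : Fin N) : (mu P i).val ≤ i.val ∧
      (Sm P (mu P i).val : ℤ) - (mu P i).val ≤ Sm P (i.val + 1) - ((i.val + 1 : ℕ) : ℤ) ∧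
      ∀ q, (mu P i).val < q → q ≤ i.val →
        (Sm P (i.val + 1) : ℤ) - ((i.val + 1 : ℕ) : ℤ) < Sm P q - q := by
  have hle := Fin.le_def.mp (mu_le P i)
  have hi := i.isLt
  refine ⟨hle, ?_, ?_⟩
  · rw [Sm_eq _ _ (by omega), Sm_eq _ _ (by omega)]
    have : Up P (mu P i).val ⊆ Up P (i.val + 1) := by
      intro x
      rw [mem_Up, mem_Up]
      rintro ⟨h1, h2⟩
      refine ⟨?_, by omega⟩
      by_contra hc
      have hne : mu P x ≠ mu P i := fun h => by rw [h] at h2; omega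
      have h3 : mu P i ≠ x := fun h => hne (by rw [← h, mu_mu])
      have h4 : x ≠ i := fun h => hne (by rw [h])
      have h3' := Fin.val_ne_of_ne h3
      have h4' := Fin.val_ne_of_ne h4
      have := nc_mu hP (mu P x) (mu P i) x i (by rw [Fin.lt_def]; omega)
        (by rw [Fin.lt_def]; omega) (by rw [Fin.lt_def]; omega) (mu_mu P x) (mu_mu P i)
      rw [mu_mu, mu_mu] at this
      exact hne this
    have := Finset.card_le_card this
    omega
  · intro q hq hqi
    rw [Sm_eq _ _ (by omega), Sm_eq _ _ (by omega)]
    have : Up P (i.val + 1) ⊂ Up P q := by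
      rw [Finset.ssubset_iff_of_subset]
      · refine ⟨i, ?_, ?_⟩
        · rw [mem_Up]; omega
        · rw [mem_Up]; omega
      · intro x
        rw [mem_Up, mem_Up]
        rintro ⟨h1, h2⟩
        refine ⟨by omega, ?_⟩
        by_contra hc
        have hne : mu P i ≠ mu P x := fun h => by rw [h] at hq; omega
        have h3 : mu P x ≠ i := fun h => hne (by rw [← h, mu_mu])
        have h3' := Fin.val_ne_of_ne h3
        have := nc_mu hP (mu P i) (mu P x) i x (by rw [Fin.lt_def]; omega)
          (by rw [Fin.lt_def]; omega) (by rw [Fin.lt_def]; omega) (mu_mu P i) (mu_mu P x)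
        rw [mu_mu, mu_mu] at this
        exact hne this
    have := Finset.card_lt_card this
    omega

lemma eq_of_Sm {N : ℕ} {P Q : Finpartition (Finset.univ : Finset (Fin N))}
    (hP : IsNoncrossing P) (hQ : IsNoncrossing Q) (h : ∀ q ≤ N, Sm P q = Sm Q q) : P = Q := by
  apply eq_of_mu
  intro x
  have hx := x.isLt
  apply Fin.ext
  have a := mu_char hP x
  have b := mu_char hQ x
  refine op_unique (fun q => (Sm P q : ℤ) - q) x.val _ _ a ⟨b.1, ?_, ?_⟩
  · have := b.2.1
    rw [← h _ (by omega), ← h _ (by omega)] at this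
    exact this
  · intro q h1 h2
    have := b.2.2 q h1 h2
    rw [← h _ (by omega), ← h _ (by omega)] at this
    exact this

/-- The size of the block opened at `j` (zero if there is none). -/
def wdn {N : ℕ} (P : Finpartition (Finset.univ : Finset (Fin N))) (j : ℕ) : ℕ :=
  (Finset.univ.filter fun x : Fin N => (mu P x).val = j).card

lemma Sm_sum {N : ℕ} (P : Finpartition (Finset.univ : Finset (Fin N))) (q : ℕ) :
    Sm P q = ∑ j ∈ Finset.range q, wdn P j := by
  unfold Sm wdn
  rw [Finset.card_eq_sum_card_fiberwise (f := fun x => (mu P x).val) (t := Finset.range q)]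
  · refine Finset.sum_congr rfl fun j hj => ?_
    rw [Finset.filter_filter]
    congr 1
    ext x
    simp only [Finset.mem_filter, Finset.mem_univ, true_and]
    rw [Finset.mem_range] at hj
    omega
  · intro x hx
    simpa using hx

lemma dvd_wdn {N m : ℕ} (P : Finpartition (Finset.univ : Finset (Fin N)))
    (hd : ∀ B ∈ P.parts, m ∣ B.card) (j : ℕ) : m ∣ wdn P j := by
  unfold wdn
  rcases Finset.eq_empty_or_nonempty (Finset.univ.filter fun x : Fin N => (mu P x).val = j)
    with h | ⟨x, hx⟩
  · simp [h]
  · simp only [Finset.mem_filter, Finset.mem_univ, true_and] at hx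
    have : (Finset.univ.filter fun x : Fin N => (mu P x).val = j) = P.part x := by
      ext y
      rw [mem_part_iff_mu, Fin.ext_iff, hx]
      simp
    rw [this]
    exact hd _ (by simp)

/-- Positive `m`-divisible non-crossing partitions of `Fin (L+1)`. -/
def PosNC (m L : ℕ) (P : Finpartition (Finset.univ : Finset (Fin (L + 1)))) : Prop :=
  IsNoncrossing P ∧ (∀ B ∈ P.parts, m ∣ B.card) ∧ (mu P (Fin.last L)).val = 0

def wordOf (m L : ℕ) (P : Finpartition (Finset.univ : Finset (Fin (L + 1)))) : Fin L → ℕ :=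
  fun i => wdn P i.val / m

lemma preS_wordOf (m L : ℕ) [NeZero L] (P : Finpartition (Finset.univ : Finset (Fin (L + 1))))
    (hP : PosNC m L P) (q : ℕ) (hq : q ≤ L) : m * preS (wordOf m L P) q = Sm P q := by
  rw [Sm_sum, preS, Finset.mul_sum]
  refine Finset.sum_congr rfl fun j hj => ?_
  rw [Finset.mem_range] at hj
  rw [wordOf, Fin.val_ofNat, Nat.mod_eq_of_lt (by omega)]
  exact Nat.mul_div_cancel' (dvd_wdn P hP.2.1 j)

lemma Sm_L (m L : ℕ) [NeZero L] (P : Finpartition (Finset.univ : Finset (Fin (L + 1))))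
    (hP : PosNC m L P) (q : ℕ) (hq : L ≤ q) : Sm P q = L + 1 := by
  unfold Sm
  rw [Finset.filter_true_of_mem]
  · simp
  · intro x _
    have h1 := Fin.le_def.mp (mu_le P x)
    have h2 := x.isLt
    have h3 := NeZero.pos L
    by_contra hc
    have : x = Fin.last L := Fin.ext (by rw [Fin.val_last]; omega)
    rw [this, hP.2.2] at hc
    omega

lemma wordOf_sum (m n L : ℕ) (hm : 0 < m) [NeZero L] (hN : m * n = L + 1)
    (P : Finpartition (Finset.univ : Finset (Fin (L + 1))))
    (hP : PosNC m L P) : ∑ i, wordOf m L P i = n := by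
  rw [← preS_full]
  apply Nat.eq_of_mul_eq_mul_left hm
  rw [preS_wordOf m L P hP L le_rfl, Sm_L m L P hP L le_rfl, hN]

lemma wordOf_good (m L : ℕ) [NeZero L]
    (P : Finpartition (Finset.univ : Finset (Fin (L + 1))))
    (hP : PosNC m L P) : GoodW m (wordOf m L P) := by
  intro q h0 hq
  rw [preS_wordOf m L P hP q hq, Sm_eq P q (by omega)]
  have : 0 < (Up P q).card := Finset.card_pos.mpr ⟨Fin.last L, by
    rw [mem_Up, hP.2.2, Fin.val_last]; exact ⟨hq, h0⟩⟩
  omega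

lemma wordOf_inj (m L : ℕ) [NeZero L]
    (P Q : Finpartition (Finset.univ : Finset (Fin (L + 1))))
    (hP : PosNC m L P) (hQ : PosNC m L Q) (h : wordOf m L P = wordOf m L Q) : P = Q := by
  apply eq_of_Sm hP.1 hQ.1
  intro q _
  by_cases hq : q ≤ L
  · rw [← preS_wordOf m L P hP q hq, ← preS_wordOf m L Q hQ q hq, h]
  · rw [Sm_L m L P hP q (by omega), Sm_L m L Q hQ q (by omega)]

/-- Height function of a word. -/
def hgt (m : ℕ) {L : ℕ} [NeZero L] (c : Fin L → ℕ) (q : ℕ) : ℤ :=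
  if q ≤ L then (m * preS c q : ℤ) - q else 0

lemma preS_succ {L : ℕ} [NeZero L] (c : Fin L → ℕ) (q : ℕ) :
    preS c (q + 1) = preS c q + c (Fin.ofNat L q) := by
  unfold preS; rw [Finset.sum_range_succ]

lemma hgt_succ (m : ℕ) {L : ℕ} [NeZero L] (c : Fin L → ℕ) (i : ℕ) (hi : i < L) :
    hgt m c (i + 1) = hgt m c i + m * c (Fin.ofNat L i) - 1 := by
  unfold hgt
  rw [if_pos (by omega), if_pos (by omega), preS_succ]
  push_cast
  ring

lemma hgt_L (m n L : ℕ) [NeZero L] (hN : m * n = L + 1) (c : Fin L → ℕ)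
    (hc : ∑ i, c i = n) : hgt m c L = 1 := by
  unfold hgt
  rw [if_pos le_rfl, preS_full, hc]
  have : (m * n : ℤ) = L + 1 := by exact_mod_cast hN
  omega

lemma hgt_Hgt (m n L : ℕ) [NeZero L] (hN : m * n = L + 1) (c : Fin L → ℕ)
    (hc : ∑ i, c i = n) (hg : GoodW m c) : Hgt (L + 1) (hgt m c) where
  zero := by simp [hgt, preS]
  last := by simp [hgt]
  pos := by
    intro q h0 hq
    unfold hgt
    rw [if_pos (by omega)]
    have := hg q h0 (by omega)
    have : (q : ℤ) < m * preS c q := by exact_mod_cast this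
    omega
  step := by
    intro i hi
    rcases (Nat.lt_succ_iff.mp hi).eq_or_lt with rfl | h
    · rw [hgt_L m n i hN c hc]; simp [hgt]
    · rw [hgt_succ m c i h]
      have : (0 : ℤ) ≤ m * c (Fin.ofNat L i) := by positivity
      omega

lemma wordOf_surj (m n L : ℕ) (hm : 0 < m) [NeZero L] (hN : m * n = L + 1) (c : Fin L → ℕ)
    (hc : ∑ i, c i = n) (hg : GoodW m c) : ∃ P, PosNC m L P ∧ wordOf m L P = c := by
  classical
  have H := hgt_Hgt m n L hN c hc hg
  set h := hgt m c with hh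
  let s : Setoid (Fin (L + 1)) := Setoid.ker fun i => opn h i.val
  let P := Finpartition.ofSetoid s
  have hpart : ∀ x y, y ∈ P.part x ↔ opn h y.val = opn h x.val := by
    intro x y
    rw [Finpartition.mem_part_ofSetoid_iff_rel]
    exact eq_comm
  have hmu : ∀ x, (mu P x).val = opn h x.val := by
    intro x
    have h1 := (hpart x _).mp (mu_mem P x)
    have h2 := (H.spec x x.isLt).1
    have h3 := x.isLt
    apply le_antisymm
    · have : (⟨opn h x.val, by omega⟩ : Fin (L + 1)) ∈ P.part x := by
        rw [hpart]; exact H.idem x x.isLt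
      exact Fin.le_def.mp (Finset.min'_le _ _ this)
    · rw [← h1]; exact (H.spec _ (mu P x).isLt).1
  have hw : ∀ j, j < L → wdn P j = m * c (Fin.ofNat L j) := by
    intro j hj
    have := H.card_fiber j (by omega)
    rw [hh, hgt_succ m c j hj, ← hh] at this
    unfold wdn
    simp only [hmu]
    apply Nat.cast_injective (R := ℤ)
    rw [this]
    push_cast
    ring
  have hlast : opn h L = 0 := by
    refine op_unique h L _ _ (H.spec L (by omega)) ⟨Nat.zero_le _, ?_, ?_⟩
    · rw [H.zero, H.last]
    · intro q h0 hq
      rw [H.last]; exact H.pos q h0 (by omega)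
  refine ⟨P, ⟨?_, ?_, ?_⟩, ?_⟩
  · intro B hB C hC a b c d hab hbc hcd ha hc hb hd
    rw [← P.part_eq_of_mem hB ha, ← P.part_eq_of_mem hC hb, ← mu_eq_iff]
    rw [← P.part_eq_of_mem hB ha, hpart] at hc
    rw [← P.part_eq_of_mem hC hb, hpart] at hd
    apply Fin.ext
    rw [hmu, hmu]
    exact H.noncross a b c d hab hbc hcd d.isLt hc.symm hd.symm
  · intro B hB
    obtain ⟨x, hx⟩ := P.nonempty_of_mem_parts hB
    have e : B.card = wdn P (mu P x).val := by
      unfold wdn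
      rw [← P.part_eq_of_mem hB hx]
      congr 1
      ext y
      rw [mem_part_iff_mu, Fin.ext_iff]
      simp
    rw [e]
    have h1 : (mu P x).val ≠ L := by
      intro hL
      have h2 := H.idem x.val x.isLt
      rw [← hmu, hL, hlast] at h2
      exact NeZero.ne L h2.symm
    rw [hw _ (by have := (mu P x).isLt; omega)]
    exact Dvd.intro _ rfl
  · rw [hmu, Fin.val_last, hlast]
  · funext i
    unfold wordOf
    rw [hw _ i.isLt, Nat.mul_div_cancel_left _ hm, Fin.ofNat_val_eq_self]

lemma card_posNC (m n L : ℕ) (hm : 0 < m) (hn : 0 < n) [NeZero L] (hN : m * n = L + 1) :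
    n * Nat.card {P // PosNC m L P} = (L + n - 1).choose (n - 1) := by
  refine final_arith n L _ (NeZero.pos L) hn ?_
  rw [← card_good m n L hN]
  congr 1
  refine Nat.card_eq_of_bijective
    (fun P => ⟨wordOf m L P.1, wordOf_sum m n L hm hN P.1 P.2, wordOf_good m L P.1 P.2⟩) ⟨?_, ?_⟩
  · rintro ⟨P, hP⟩ ⟨Q, hQ⟩ h
    simp only [Subtype.mk.injEq] at h ⊢
    exact wordOf_inj m L P Q hP hQ h
  · rintro ⟨c, hc, hg⟩
    obtain ⟨P, hP, e⟩ := wordOf_surj m n L hm hN c hc hg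
    exact ⟨⟨P, hP⟩, Subtype.ext e⟩

lemma stmt_aux (m n N : ℕ) (hm : 0 < m) (hn : 2 ≤ n) (hN : m * n = N) (h0 : 0 < N)
    (h1 : N - 1 < N) :
    n * Nat.card {P : Finpartition (Finset.univ : Finset (Fin N)) //
        IsNoncrossing P ∧ (∀ B ∈ P.parts, m ∣ B.card) ∧
        ∃ B ∈ P.parts, (⟨0, h0⟩ : Fin N) ∈ B ∧ (⟨N - 1, h1⟩ : Fin N) ∈ B} =
      Nat.choose ((m + 1) * n - 2) (n - 1) := by
  obtain ⟨L, rfl⟩ : ∃ L, N = L + 1 := ⟨N - 1, by omega⟩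
  have hL : L ≠ 0 := by rintro rfl; nlinarith
  haveI : NeZero L := ⟨hL⟩
  have e := card_posNC m n L hm (by omega) hN
  rw [show (m + 1) * n - 2 = L + n - 1 by rw [add_mul, hN]; omega, ← e]
  congr 1
  refine Nat.card_congr (Equiv.subtypeEquivRight fun P => ?_)
  unfold PosNC
  refine and_congr_right fun _ => and_congr_right fun _ => ?_
  constructor
  · rintro ⟨B, hB, ha, hb⟩
    have : (⟨0, h0⟩ : Fin (L + 1)) ∈ P.part (Fin.last L) := by
      rw [P.part_eq_of_mem hB (a := Fin.last L) hb]; exact ha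
    have := Fin.le_def.mp (Finset.min'_le _ _ this)
    exact Nat.le_zero.mp this
  · intro h
    refine ⟨P.part (Fin.last L), by simp, ?_, ?_⟩
    · have := mu_mem P (Fin.last L)
      rwa [show mu P (Fin.last L) = ⟨0, h0⟩ from Fin.ext h] at this
    · exact P.mem_part (a := Fin.last L) (by simp)

/-- For positive integers `m` and `n` with `n ≥ 2`, the number of positive `m`-divisible
non-crossing partitions of `{1, 2, …, mn}` (non-crossing partitions all of whose block sizes
are divisible by `m` and where `1` and `mn` lie in the same block) equals
`(1/n) · C((m+1)n - 2, n - 1)`. -/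
theorem stmt4 (m n : ℕ) (hm : 0 < m) (hn : 2 ≤ n) :
    n * Nat.card {P : Finpartition (Finset.univ : Finset (Fin (m * n))) //
        IsNoncrossing P ∧ (∀ B ∈ P.parts, m ∣ B.card) ∧
        ∃ B ∈ P.parts,
          (⟨0, Nat.mul_pos hm (by omega)⟩ : Fin (m * n)) ∈ B ∧
          (⟨m * n - 1, Nat.sub_lt (Nat.mul_pos hm (by omega)) Nat.one_pos⟩ : Fin (m * n)) ∈ B} =
      Nat.choose ((m + 1) * n - 2) (n - 1) := by
  exact stmt_aux m n (m * n) hm hn rfl _ _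
end
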